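/- Let H, K, L be complex Hilbert spaces and let 𝒰 ⊆ B(K,L) and 𝒱 ⊆ B(H,K) be ternary rings of operators that semi-commute, i.e. u₁*u₂ commutes with v₁v₂* for all u₁,u₂ ∈ 𝒰 and v₁,v₂ ∈ 𝒱. Assume 𝒱 is left non-degenerate, i.e. the linear span of {v*ξ : v ∈ 𝒱, ξ ∈ K} is dense in H. Let R ⊆ B(K) denote the norm-closed linear span of {u₁*u₂ : u₁,u₂ ∈ 𝒰}, which is a C*-subalgebra of B(K). Then there exists a *-homomorphism ρ : R → B(H) such that ρ(b) v* = v* b for every b ∈ R and v ∈ 𝒱, and such that ρ(b) commutes with v₁*v₂ for all b ∈ R and v₁,v₂ ∈ 𝒱. -/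

import Mathlib

set_option linter.unusedSectionVars false

namespace TROAux

open ContinuousLinearMap

variable {H K : Type*}
    [NormedAddCommGroup H] [InnerProductSpace ℂ H] [CompleteSpace H]
    [NormedAddCommGroup K] [InnerProductSpace ℂ K] [CompleteSpace K]

/-- The map sending a finitely supported family `ξ` to `∑ v* ξ_v`. -/
noncomputable def Phi (V : Submodule ℂ (H →L[ℂ] K)) : (V →₀ K) →ₗ[ℂ] H :=
  Finsupp.lsum ℂ (fun v : V => ((adjoint (v : H →L[ℂ] K) : K →L[ℂ] H) : K →ₗ[ℂ] H))

/-- Coordinatewise application of an operator. -/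
noncomputable def Bm (V : Submodule ℂ (H →L[ℂ] K)) (b : K →L[ℂ] K) : (V →₀ K) →ₗ[ℂ] (V →₀ K) :=
  Finsupp.mapRange.linearMap (b : K →ₗ[ℂ] K)

/-- The commutant condition. -/
def P (V : Submodule ℂ (H →L[ℂ] K)) (b : K →L[ℂ] K) : Prop :=
  ∀ v ∈ V, ∀ w ∈ V, Commute b (v ∘L adjoint w)

variable {V : Submodule ℂ (H →L[ℂ] K)}

lemma Phi_single (v : V) (x : K) :
    Phi V (Finsupp.single v x) = adjoint (v : H →L[ℂ] K) x := by
  simp [Phi]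

lemma Bm_single (b : K →L[ℂ] K) (v : V) (x : K) :
    Bm V b (Finsupp.single v x) = Finsupp.single v (b x) := by
  simp [Bm]

lemma Bm_mul (b c : K →L[ℂ] K) (f : V →₀ K) : Bm V (b * c) f = Bm V b (Bm V c f) := by
  ext v; simp [Bm]

lemma Bm_add (b c : K →L[ℂ] K) (f : V →₀ K) : Bm V (b + c) f = Bm V b f + Bm V c f := by
  ext v; simp [Bm]

lemma Bm_sub (b c : K →L[ℂ] K) (f : V →₀ K) : Bm V (b - c) f = Bm V b f - Bm V c f := by
  ext v; simp [Bm]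

lemma Bm_smul (a : ℂ) (c : K →L[ℂ] K) (f : V →₀ K) : Bm V (a • c) f = a • Bm V c f := by
  ext v; simp [Bm]

lemma Bm_one (f : V →₀ K) : Bm V (1 : K →L[ℂ] K) f = f := by
  ext v; simp [Bm]

lemma P.add {b c : K →L[ℂ] K} (hb : P V b) (hc : P V c) : P V (b + c) :=
  fun v hv w hw => (hb v hv w hw).add_left (hc v hv w hw)

lemma P.mul {b c : K →L[ℂ] K} (hb : P V b) (hc : P V c) : P V (b * c) :=
  fun v hv w hw => (hb v hv w hw).mul_left (hc v hv w hw)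

lemma P.smul {c : K →L[ℂ] K} (a : ℂ) (hc : P V c) : P V (a • c) :=
  fun v hv w hw => (hc v hv w hw).smul_left a

lemma P.star {b : K →L[ℂ] K} (hb : P V b) : P V (Star.star b) := by
  intro v hv w hw
  have h := (hb w hw v hv).star_star
  have e : Star.star (w ∘L adjoint v) = v ∘L adjoint w := by
    rw [star_eq_adjoint, adjoint_comp, adjoint_adjoint]
  rwa [e] at h

lemma P_one : P V (1 : K →L[ℂ] K) := fun _ _ _ _ => Commute.one_left _

lemma inner_Bm {b : K →L[ℂ] K} (hb : P V b) (f g : V →₀ K) :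
    inner ℂ (Phi V (Bm V b f)) (Phi V g) = inner ℂ (Phi V f) (Phi V (Bm V (star b) g)) := by
  induction f using Finsupp.induction_linear with
  | zero => simp
  | add f₁ f₂ h₁ h₂ => simp only [map_add, inner_add_left, h₁, h₂]
  | single v x =>
    induction g using Finsupp.induction_linear with
    | zero => simp
    | add f₁ f₂ h₁ h₂ => simp only [map_add, inner_add_right, h₁, h₂]
    | single w y =>
      rw [Bm_single, Bm_single, Phi_single, Phi_single, Phi_single, Phi_single,
        adjoint_inner_right, adjoint_inner_right, star_eq_adjoint, adjoint_inner_right]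
      have h := DFunLike.congr_fun (hb w w.2 v v.2).eq x
      simp only [mul_apply_eq_comp, ContinuousLinearMap.comp_apply] at h
      rw [h]

lemma norm_Bm_le {b : K →L[ℂ] K} (hb : P V b) (f : V →₀ K) :
    ‖Phi V (Bm V b f)‖ ≤ ‖b‖ * ‖Phi V f‖ := by
  set d : K →L[ℂ] K := ((‖b‖ ^ 2 : ℝ) : ℂ) • 1 - star b * b with hd
  have hd0 : 0 ≤ d := by
    have h := CStarAlgebra.star_mul_le_algebraMap_norm_sq (a := b)
    rw [hd, sub_nonneg]
    refine h.trans_eq ?_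
    rw [Algebra.algebraMap_eq_smul_one]
    ext x; simp [← Complex.coe_smul]
  have hPd : P V d := by
    intro v hv w hw
    exact ((P_one.smul _) v hv w hw).sub_left ((hb.star.mul hb) v hv w hw)
  set c := CFC.sqrt d with hc
  have hPc : P V c := fun v hv w hw => by
    have := (hPd v hv w hw).cfcₙ_nnreal NNReal.sqrt
    exact this
  have hcs : star c = c := (IsSelfAdjoint.of_nonneg (CFC.sqrt_nonneg d)).star_eq
  have hcc : c * c = d := CFC.sqrt_mul_sqrt_self d hd0
  have h1 : inner ℂ (Phi V (Bm V c f)) (Phi V (Bm V c f)) =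
      ((‖b‖ ^ 2 : ℝ) : ℂ) * inner ℂ (Phi V f) (Phi V f)
        - inner ℂ (Phi V (Bm V b f)) (Phi V (Bm V b f)) := by
    rw [inner_Bm hPc, hcs, ← Bm_mul, hcc, hd, Bm_sub, Bm_smul, Bm_one, map_sub, inner_sub_right,
      map_smul, inner_smul_right, Bm_mul, ← inner_Bm hb]
  simp only [inner_self_eq_norm_sq_to_K] at h1
  have h2 : ‖Phi V (Bm V c f)‖ ^ 2 = ‖b‖ ^ 2 * ‖Phi V f‖ ^ 2 - ‖Phi V (Bm V b f)‖ ^ 2 := by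
    apply Complex.ofReal_injective
    push_cast at h1 ⊢
    exact h1
  refine le_of_sq_le_sq ?_ (by positivity)
  nlinarith [sq_nonneg ‖Phi V (Bm V c f)‖]

lemma dense_Phi (hnondeg : Dense
      ((Submodule.span ℂ {x : H | ∃ v ∈ V, ∃ ξ : K, x = (adjoint v) ξ}) : Set H)) :
    DenseRange (Phi V) := by
  refine hnondeg.mono ?_
  change _ ≤ (LinearMap.range (Phi V) : Set H)
  refine Submodule.span_le.2 ?_
  rintro x ⟨v, hv, ξ, rfl⟩
  exact ⟨Finsupp.single ⟨v, hv⟩ ξ, Phi_single _ _⟩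

/-- The extension. -/
noncomputable def rho (V : Submodule ℂ (H →L[ℂ] K)) (b : K →L[ℂ] K) : H →L[ℂ] H :=
  (Phi V ∘ₗ Bm V b).extendOfNorm (Phi V)

lemma rho_Phi (hd : DenseRange (Phi V)) {b : K →L[ℂ] K} (hb : P V b) (f : V →₀ K) :
    rho V b (Phi V f) = Phi V (Bm V b f) :=
  LinearMap.extendOfNorm_eq hd ⟨‖b‖, norm_Bm_le hb⟩ f

lemma ext_Phi (hd : DenseRange (Phi V)) {S T : H →L[ℂ] H}
    (h : ∀ f, S (Phi V f) = T (Phi V f)) : S = T := by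
  apply DFunLike.coe_injective
  exact hd.equalizer S.continuous T.continuous (funext h)

lemma rho_star (hd : DenseRange (Phi V)) {b : K →L[ℂ] K} (hb : P V b) :
    rho V (star b) = star (rho V b) := by
  refine ext_Phi hd fun g => ?_
  refine hd.eq_of_inner_left (𝕜 := ℂ) ?_
  intro f
  rw [rho_Phi hd hb.star, star_eq_adjoint (rho V b), adjoint_inner_left, rho_Phi hd hb, inner_Bm hb.star,
    star_star]

lemma rho_adj (hd : DenseRange (Phi V)) {b : K →L[ℂ] K} (hb : P V b) {v : H →L[ℂ] K}
    (hv : v ∈ V) : rho V b ∘L adjoint v = adjoint v ∘L b := by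
  ext x
  have h := rho_Phi hd hb (Finsupp.single ⟨v, hv⟩ x)
  rwa [Bm_single, Phi_single, Phi_single] at h

lemma comp_rho (hd : DenseRange (Phi V)) {b : K →L[ℂ] K} (hb : P V b) {v : H →L[ℂ] K}
    (hv : v ∈ V) : v ∘L rho V b = b ∘L v := by
  have h := congrArg adjoint (rho_adj hd hb.star hv)
  rw [adjoint_comp, adjoint_comp, adjoint_adjoint, rho_star hd hb, star_eq_adjoint,
    star_eq_adjoint, adjoint_adjoint, adjoint_adjoint] at h
  exact h

end TROAux


open ContinuousLinearMap in
/-- (Commutant lifting for semi-commuting TROs.)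
Let `𝒰 ⊆ B(K,L)` and `𝒱 ⊆ B(H,K)` be TROs that semi-commute, with `𝒱` left
non-degenerate, and let `R𝒰` be the norm-closed linear span of `{u₁* u₂}`.
Then there is a *-homomorphism `ρ : R𝒰 → B(H)` with `ρ(b) v* = v* b` for all
`b ∈ R𝒰`, `v ∈ 𝒱`, whose range commutes with all `v₁* v₂`, `v₁, v₂ ∈ 𝒱`. -/
theorem statement0
    {H K L : Type*}
    [NormedAddCommGroup H] [InnerProductSpace ℂ H] [CompleteSpace H]
    [NormedAddCommGroup K] [InnerProductSpace ℂ K] [CompleteSpace K]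
    [NormedAddCommGroup L] [InnerProductSpace ℂ L] [CompleteSpace L]
    (𝒰 : Submodule ℂ (K →L[ℂ] L)) (𝒱 : Submodule ℂ (H →L[ℂ] K))
    (h𝒰closed : IsClosed (𝒰 : Set (K →L[ℂ] L)))
    (h𝒱closed : IsClosed (𝒱 : Set (H →L[ℂ] K)))
    (h𝒰tro : ∀ S ∈ 𝒰, ∀ T ∈ 𝒰, ∀ R ∈ 𝒰, S ∘L (adjoint T) ∘L R ∈ 𝒰)
    (h𝒱tro : ∀ S ∈ 𝒱, ∀ T ∈ 𝒱, ∀ R ∈ 𝒱, S ∘L (adjoint T) ∘L R ∈ 𝒱)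
    (hsemi : ∀ u₁ ∈ 𝒰, ∀ u₂ ∈ 𝒰, ∀ v₁ ∈ 𝒱, ∀ v₂ ∈ 𝒱,
      Commute ((adjoint u₁) ∘L u₂) (v₁ ∘L (adjoint v₂)))
    (hnondeg : Dense
      ((Submodule.span ℂ {x : H | ∃ v ∈ 𝒱, ∃ ξ : K, x = (adjoint v) ξ}) : Set H))
    (R𝒰 : Set (K →L[ℂ] K))
    (hR𝒰 : R𝒰 = closure
      ((Submodule.span ℂ {b : K →L[ℂ] K | ∃ u₁ ∈ 𝒰, ∃ u₂ ∈ 𝒰, b = (adjoint u₁) ∘L u₂}) :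
        Set (K →L[ℂ] K))) :
    ∃ ρ : (K →L[ℂ] K) → (H →L[ℂ] H),
      (∀ b₁ ∈ R𝒰, ∀ b₂ ∈ R𝒰, ρ (b₁ + b₂) = ρ b₁ + ρ b₂) ∧
      (∀ (c : ℂ), ∀ b ∈ R𝒰, ρ (c • b) = c • ρ b) ∧
      (∀ b₁ ∈ R𝒰, ∀ b₂ ∈ R𝒰, ρ (b₁ * b₂) = ρ b₁ * ρ b₂) ∧
      (∀ b ∈ R𝒰, ρ (star b) = star (ρ b)) ∧
      (∀ b ∈ R𝒰, ∀ v ∈ 𝒱, (ρ b) ∘L (adjoint v) = (adjoint v) ∘L b) ∧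
      (∀ b ∈ R𝒰, ∀ v₁ ∈ 𝒱, ∀ v₂ ∈ 𝒱, Commute (ρ b) ((adjoint v₁) ∘L v₂)) := by
  have hd := TROAux.dense_Phi hnondeg
  have hP : ∀ b ∈ R𝒰, TROAux.P 𝒱 b := by
    intro b hb v hv w hw
    rw [hR𝒰] at hb
    have hcl : IsClosed {b : K →L[ℂ] K | Commute b (v ∘L adjoint w)} :=
      isClosed_eq (continuous_id.mul continuous_const) (continuous_const.mul continuous_id)
    refine closure_minimal ?_ hcl hb
    intro c hc
    induction hc using Submodule.span_induction with
    | mem x hx =>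
      obtain ⟨u₁, h₁, u₂, h₂, rfl⟩ := hx
      exact hsemi u₁ h₁ u₂ h₂ v hv w hw
    | zero => exact Commute.zero_left _
    | add x y _ _ hx hy => exact Commute.add_left hx hy
    | smul a x _ hx => exact Commute.smul_left hx a
  refine ⟨TROAux.rho 𝒱, ?_, ?_, ?_, ?_, ?_, ?_⟩
  · intro b₁ h₁ b₂ h₂
    refine TROAux.ext_Phi hd fun f => ?_
    rw [TROAux.rho_Phi hd ((hP _ h₁).add (hP _ h₂)), add_apply, TROAux.rho_Phi hd (hP _ h₁),
      TROAux.rho_Phi hd (hP _ h₂), TROAux.Bm_add, map_add]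
  · intro c b h
    refine TROAux.ext_Phi hd fun f => ?_
    rw [TROAux.rho_Phi hd ((hP _ h).smul c), smul_apply, TROAux.rho_Phi hd (hP _ h),
      TROAux.Bm_smul, map_smul]
  · intro b₁ h₁ b₂ h₂
    refine TROAux.ext_Phi hd fun f => ?_
    rw [TROAux.rho_Phi hd ((hP _ h₁).mul (hP _ h₂)), mul_apply_eq_comp,
      TROAux.rho_Phi hd (hP _ h₂), TROAux.rho_Phi hd (hP _ h₁), TROAux.Bm_mul]
  · intro b h
    exact TROAux.rho_star hd (hP _ h)
  · intro b h v hv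
    exact TROAux.rho_adj hd (hP _ h) hv
  · intro b h v₁ h₁ v₂ h₂
    change TROAux.rho 𝒱 b ∘L (adjoint v₁ ∘L v₂) = (adjoint v₁ ∘L v₂) ∘L TROAux.rho 𝒱 b
    rw [← ContinuousLinearMap.comp_assoc, TROAux.rho_adj hd (hP _ h) h₁,
      ContinuousLinearMap.comp_assoc, ContinuousLinearMap.comp_assoc,
      TROAux.comp_rho hd (hP _ h) h₂]
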